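/- arXiv:2010.15098 — 4 statements merged into one kernel-verified Lean document; each statement's English description precedes it below -/
import Mathlib

section
/- Let (Z_n)_{n≥0} be a sequence of positive real numbers satisfying Z_{n+1} ≤ K b^n (Z_n^{1+μ₁} + Z_n^{1+μ₂}) for all n = 0, 1, 2, …, where b > 1, K > 0 and 0 < μ₁ ≤ μ₂. If Z_0 ≤ min(1, (2K)^{−1/μ₁} b^{−1/μ₁²}), then Z_n ≤ min(1, (2K)^{−1/μ₁} b^{−1/μ₁²} b^{−n/μ₁}) for all n ≥ 0; in particular Z_n → 0 as n → ∞. -/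
/-!
Write `B = (2K)^{-1/μ₁} b^{-1/μ₁²}`. As long as `Z_n ≤ 1`, the exponent `1 + μ₁` dominates, so
`Z_{n+1} ≤ (2K bⁿ Z_n^{μ₁}) Z_n`. The bound `Z_n ≤ B b^{-n/μ₁}` says exactly that the factor
`2K bⁿ Z_n^{μ₁}` is at most `b^{-1/μ₁} < 1`. Hence `Z_{n+1} ≤ b^{-1/μ₁} Z_n`, which propagates both
bounds to `n + 1`; the limit follows by comparison with a geometric sequence.
-/

open Filter

/-- Geometric convergence lemma (first smallness condition): if
`Z_{n+1} ≤ K bⁿ (Z_n^{1+μ₁} + Z_n^{1+μ₂})` with `b > 1`, `K > 0`, `0 < μ₁ ≤ μ₂`, and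
`Z₀ ≤ min(1, (2K)^{-1/μ₁} b^{-1/μ₁²})`, then
`Z_n ≤ min(1, (2K)^{-1/μ₁} b^{-1/μ₁²} b^{-n/μ₁})` for all `n`; in particular `Z_n → 0`. -/
theorem geometric_convergence_one (Z : ℕ → ℝ) (K b μ₁ μ₂ : ℝ)
    (hZpos : ∀ n, 0 < Z n) (hb : 1 < b) (hK : 0 < K)
    (hμ₁ : 0 < μ₁) (hμ₁₂ : μ₁ ≤ μ₂)
    (hrec : ∀ n : ℕ, Z (n + 1) ≤ K * b ^ (n : ℝ) * (Z n ^ (1 + μ₁) + Z n ^ (1 + μ₂)))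
    (hZ0 : Z 0 ≤ min 1 ((2 * K) ^ (-(1 / μ₁)) * b ^ (-(1 / μ₁ ^ 2)))) :
    (∀ n : ℕ, Z n ≤ min 1 ((2 * K) ^ (-(1 / μ₁)) * b ^ (-(1 / μ₁ ^ 2)) *
      b ^ (-((n : ℝ) / μ₁)))) ∧
    Tendsto Z atTop (nhds 0) := by
  have hb0 : 0 < b := one_pos.trans hb
  have hK2 : 0 < 2 * K := by positivity
  have hq1 : b ^ (-(1 / μ₁)) < 1 :=
    Real.rpow_lt_one_of_one_lt_of_neg hb (neg_lt_zero.mpr (by positivity))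
  set B : ℝ := (2 * K) ^ (-(1 / μ₁)) * b ^ (-(1 / μ₁ ^ 2)) with hB
  have hB0 : 0 < B := by positivity
  have hBpow : B ^ μ₁ = (2 * K)⁻¹ * b ^ (-(1 / μ₁)) := by
    rw [hB, Real.mul_rpow (by positivity) (by positivity), ← Real.rpow_mul hK2.le,
      ← Real.rpow_mul hb0.le, ← Real.rpow_neg_one (2 * K)]
    congr 2 <;> field_simp
  have key : ∀ n : ℕ, Z n ≤ min 1 (B * b ^ (-((n : ℝ) / μ₁))) := by
    intro n
    induction n with
    | zero => simpa using hZ0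
    | succ n ih =>
      obtain ⟨h1, h2⟩ := le_min_iff.mp ih
      have hZ := hZpos n
      have hpow : Z n ^ μ₁ ≤ (2 * K)⁻¹ * b ^ (-(1 / μ₁)) * (b ^ (n : ℝ))⁻¹ := by
        calc Z n ^ μ₁ ≤ (B * b ^ (-((n : ℝ) / μ₁))) ^ μ₁ :=
              Real.rpow_le_rpow hZ.le h2 hμ₁.le
          _ = _ := by
              rw [Real.mul_rpow hB0.le (by positivity), hBpow, ← Real.rpow_mul hb0.le,
                ← Real.rpow_neg hb0.le]
              congr 2
              field_simp
      have hcmp : Z n ^ (1 + μ₂) ≤ Z n ^ (1 + μ₁) :=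
        Real.rpow_le_rpow_of_exponent_ge hZ h1 (by linarith)
      have hbn : 0 < b ^ (n : ℝ) := by positivity
      have hstep : Z (n + 1) ≤ b ^ (-(1 / μ₁)) * Z n := by
        calc Z (n + 1) ≤ K * b ^ (n : ℝ) * (Z n ^ (1 + μ₁) + Z n ^ (1 + μ₂)) := hrec n
          _ ≤ K * b ^ (n : ℝ) * (Z n ^ (1 + μ₁) + Z n ^ (1 + μ₁)) := by gcongr
          _ = 2 * K * b ^ (n : ℝ) * Z n ^ μ₁ * Z n := by
              rw [Real.rpow_add hZ, Real.rpow_one]; ring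
          _ ≤ 2 * K * b ^ (n : ℝ) * ((2 * K)⁻¹ * b ^ (-(1 / μ₁)) * (b ^ (n : ℝ))⁻¹) * Z n := by
              gcongr
          _ = b ^ (-(1 / μ₁)) * Z n := by
              generalize b ^ (-(1 / μ₁)) = q
              field_simp
      refine le_min ?_ ?_
      · exact hstep.trans (mul_le_one₀ hq1.le hZ.le h1)
      · calc Z (n + 1) ≤ b ^ (-(1 / μ₁)) * Z n := hstep
          _ ≤ b ^ (-(1 / μ₁)) * (B * b ^ (-((n : ℝ) / μ₁))) := by gcongr
          _ = B * (b ^ (-(1 / μ₁)) * b ^ (-((n : ℝ) / μ₁))) := by ring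
          _ = B * b ^ (-(((n + 1 : ℕ) : ℝ) / μ₁)) := by
              rw [← Real.rpow_add hb0]
              congr 2
              push_cast
              ring
  refine ⟨key, ?_⟩
  have hgeom : Tendsto (fun n : ℕ => B * (b ^ (-(1 / μ₁))) ^ n) atTop (nhds 0) := by
    simpa using (tendsto_pow_atTop_nhds_zero_of_lt_one (by positivity) hq1).const_mul B
  refine squeeze_zero (fun n => (hZpos n).le) (fun n => ?_) hgeom
  refine ((key n).trans (min_le_right _ _)).trans_eq ?_
  rw [← Real.rpow_natCast, ← Real.rpow_mul hb0.le]
  congr 2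
  ring
end

section
/- Let (Z_n)_{n≥0} be a sequence of positive real numbers satisfying Z_{n+1} ≤ K b^n (Z_n^{1+μ₁} + Z_n^{1+μ₂}) for all n = 0, 1, 2, …, where b > 1, K > 0 and 0 < μ₁ ≤ μ₂. If Z_0 ≤ min((2K)^{−1/μ₁} b^{−1/μ₁²}, (2K)^{−1/μ₂} b^{−1/(μ₁μ₂) − (μ₂−μ₁)/μ₂²}), then there exists n₀ ∈ ℕ ∪ {0} with Z_{n₀} ≤ 1, and for the smallest such n₀ one has Z_n ≤ min(1, (2K)^{−1/μ₁} b^{−1/μ₁²} b^{−n/μ₁}) for all n ≥ n₀; in particular Z_n → 0 as n → ∞. -/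
/-!
On the logarithmic scale, with `z n = log (Z n)`, `L = log (2K)` and `β = log b`, the recursion gives
`z (n+1) ≤ L + nβ + (1+μ) z n`, with `μ = μ₂` when `Z n ≥ 1` and `μ = μ₁` when `Z n ≤ 1`.

Put `A n = -L/μ₁ - β/μ₁² - nβ/μ₁` and `B n = -L/μ₂ - β/(μ₁μ₂) - β(μ₂-μ₁)/μ₂² - nβ/μ₂`; the smallness
condition says `z 0 ≤ A 0` and `z 0 ≤ B 0`. The sequence `A` solves the `μ₁`-recursion exactly and `B`
is a supersolution of the `μ₂`-recursion, so `z n ≤ B n` as long as `Z` has stayed above `1`. As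
`B n → -∞`, the sequence must reach `(0, 1]`, at a first index `n₀`. The link between the two regimes
is the identity `A (n+1) - B (n+1) = (μ₂/μ₁ - 1) B n`: if `n₀ = m + 1`, then `0 < z m ≤ B m`, hence
`z n₀ ≤ B n₀ ≤ A n₀`. From `n₀` on, both `z n ≤ 0` and `z n ≤ A n` propagate.
-/

open Filter

/-- The recursion on the logarithmic scale, when `1 + μ` is the dominating exponent at step `n`. -/
lemma log_step {x y K b μ₁ μ₂ μ t : ℝ} (hx : 0 < x) (hy : 0 < y) (hb : 1 < b) (hK : 0 < K)
    (hrec : y ≤ K * b ^ t * (x ^ (1 + μ₁) + x ^ (1 + μ₂)))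
    (h₁ : x ^ (1 + μ₁) ≤ x ^ (1 + μ)) (h₂ : x ^ (1 + μ₂) ≤ x ^ (1 + μ)) :
    Real.log y ≤ Real.log (2 * K) + t * Real.log b + (1 + μ) * Real.log x := by
  have hb0 : 0 < b := by linarith
  have hbt : 0 < b ^ t := Real.rpow_pos_of_pos hb0 _
  have hxp : 0 < x ^ (1 + μ) := Real.rpow_pos_of_pos hx _
  have h : y ≤ 2 * K * b ^ t * x ^ (1 + μ) := by
    have : K * b ^ t * (x ^ (1 + μ₁) + x ^ (1 + μ₂))
        ≤ K * b ^ t * (x ^ (1 + μ) + x ^ (1 + μ)) := by gcongr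
    linarith
  have h' := Real.log_le_log hy h
  rwa [Real.log_mul (by positivity) hxp.ne', Real.log_mul (by positivity) hbt.ne',
    Real.log_rpow hb0, Real.log_rpow hx] at h'

/-- The lemma on the logarithmic scale, without the final convergence statement. -/
lemma log_geometric (z : ℕ → ℝ) (L β μ₁ μ₂ : ℝ) (hβ : 0 < β)
    (hμ₁ : 0 < μ₁) (hμ₁₂ : μ₁ ≤ μ₂)
    (hlow : ∀ n : ℕ, z n ≤ 0 → z (n + 1) ≤ L + n * β + (1 + μ₁) * z n)
    (hhigh : ∀ n : ℕ, 0 < z n → z (n + 1) ≤ L + n * β + (1 + μ₂) * z n)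
    (hA0 : z 0 ≤ -(L / μ₁) - β / μ₁ ^ 2)
    (hB0 : z 0 ≤ -(L / μ₂) - β / (μ₁ * μ₂) - β * (μ₂ - μ₁) / μ₂ ^ 2) :
    (∃ n₀, z n₀ ≤ 0) ∧
    ∀ n₀, z n₀ ≤ 0 → (∀ m < n₀, 0 < z m) → ∀ n, n₀ ≤ n →
      z n ≤ 0 ∧ z n ≤ -(L / μ₁) - β / μ₁ ^ 2 - n * β / μ₁ := by
  have hμ₂ : 0 < μ₂ := hμ₁.trans_le hμ₁₂
  obtain ⟨B, hB⟩ : ∃ B : ℕ → ℝ, ∀ n : ℕ,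
      B n = -(L / μ₂) - β / (μ₁ * μ₂) - β * (μ₂ - μ₁) / μ₂ ^ 2 - n * β / μ₂ := ⟨_, fun _ => rfl⟩
  obtain ⟨A, hA⟩ : ∃ A : ℕ → ℝ, ∀ n : ℕ,
      A n = -(L / μ₁) - β / μ₁ ^ 2 - n * β / μ₁ := ⟨_, fun _ => rfl⟩
  have hBstep : ∀ n : ℕ, L + n * β + (1 + μ₂) * B n ≤ B (n + 1) := by
    intro n
    have e : B (n + 1) - (L + n * β + (1 + μ₂) * B n)
        = β * (μ₂ - μ₁) * (1 + μ₁) / (μ₁ * μ₂) := by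
      rw [hB, hB]; push_cast; field_simp; ring
    have : 0 ≤ β * (μ₂ - μ₁) * (1 + μ₁) / (μ₁ * μ₂) := by
      have := sub_nonneg.2 hμ₁₂
      positivity
    linarith
  have hAstep : ∀ n : ℕ, L + n * β + (1 + μ₁) * A n = A (n + 1) := by
    intro n; rw [hA, hA]; push_cast; field_simp; ring
  have hAB : ∀ n : ℕ, 0 < B n → B (n + 1) ≤ A (n + 1) := by
    intro n hn
    have e : A (n + 1) - B (n + 1) = (μ₂ - μ₁) / μ₁ * B n := by
      rw [hA, hB, hB]; push_cast; field_simp; ring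
    have : 0 ≤ (μ₂ - μ₁) / μ₁ * B n := by
      have := sub_nonneg.2 hμ₁₂
      positivity
    linarith
  have hzB : ∀ n : ℕ, (∀ m < n, 0 < z m) → z n ≤ B n := by
    intro n
    induction n with
    | zero => intro _; rw [hB]; simpa using hB0
    | succ k ih =>
      intro h
      have h1 := ih fun m hm => h m (by omega)
      have h2 := hhigh k (h k (by omega))
      have h3 := mul_le_mul_of_nonneg_left h1 (show 0 ≤ 1 + μ₂ by linarith)
      linarith [hBstep k]
  refine ⟨?_, ?_⟩
  · by_contra! h
    obtain ⟨n, hn⟩ := exists_nat_gt (B 0 * μ₂ / β)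
    have h1 := hzB n fun m _ => h m
    have h2 : B n = B 0 - n * β / μ₂ := by rw [hB, hB]; simp
    have h3 : B 0 < n * β / μ₂ := by
      rw [div_lt_iff₀ hβ] at hn
      rwa [lt_div_iff₀ hμ₂]
    linarith [h n]
  · intro n₀ h0 hmin n hn
    rw [← hA]
    induction n, hn using Nat.le_induction with
    | base =>
      refine ⟨h0, ?_⟩
      cases n₀ with
      | zero => rw [hA]; simpa using hA0
      | succ m =>
        have h1 : z m ≤ B m := hzB m fun k hk => hmin k (by omega)
        exact (hzB _ hmin).trans (hAB m ((hmin m (by omega)).trans_le h1))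
    | succ n hn ih =>
      obtain ⟨ih0, ihA⟩ := ih
      have h2 := hlow n ih0
      have h3 : z (n + 1) ≤ A (n + 1) := by
        have := mul_le_mul_of_nonneg_left ihA (show 0 ≤ 1 + μ₁ by linarith)
        linarith [hAstep n]
      refine ⟨?_, h3⟩
      -- If `L + nβ ≤ 0` the recursion preserves `z ≤ 0`; otherwise `A (n + 1)` is itself negative.
      rcases le_or_gt (L + n * β) 0 with h | h
      · have := mul_nonpos_of_nonneg_of_nonpos (show 0 ≤ 1 + μ₁ by linarith) ih0
        linarith
      · have e : A (n + 1) = -((L + n * β + β) / μ₁ + β / μ₁ ^ 2) := by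
          rw [hA]; push_cast; field_simp; ring
        have : 0 < (L + n * β + β) / μ₁ + β / μ₁ ^ 2 := by positivity
        linarith

/-- Geometric convergence lemma (second smallness condition): if
`Z_{n+1} ≤ K bⁿ (Z_n^{1+μ₁} + Z_n^{1+μ₂})` with `b > 1`, `K > 0`, `0 < μ₁ ≤ μ₂`, and
`Z₀ ≤ min((2K)^{-1/μ₁} b^{-1/μ₁²}, (2K)^{-1/μ₂} b^{-1/(μ₁μ₂) - (μ₂-μ₁)/μ₂²})`, then
`Z_{n₀} ≤ 1` for some `n₀`, and for the smallest such `n₀` one has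
`Z_n ≤ min(1, (2K)^{-1/μ₁} b^{-1/μ₁²} b^{-n/μ₁})` for all `n ≥ n₀`;
in particular `Z_n → 0`. -/
theorem geometric_convergence_two (Z : ℕ → ℝ) (K b μ₁ μ₂ : ℝ)
    (hZpos : ∀ n, 0 < Z n) (hb : 1 < b) (hK : 0 < K)
    (hμ₁ : 0 < μ₁) (hμ₁₂ : μ₁ ≤ μ₂)
    (hrec : ∀ n : ℕ, Z (n + 1) ≤ K * b ^ (n : ℝ) * (Z n ^ (1 + μ₁) + Z n ^ (1 + μ₂)))
    (hZ0 : Z 0 ≤ min ((2 * K) ^ (-(1 / μ₁)) * b ^ (-(1 / μ₁ ^ 2)))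
      ((2 * K) ^ (-(1 / μ₂)) * b ^ (-(1 / (μ₁ * μ₂)) - (μ₂ - μ₁) / μ₂ ^ 2))) :
    (∃ n₀ : ℕ, Z n₀ ≤ 1) ∧
    (∀ n₀ : ℕ, Z n₀ ≤ 1 → (∀ m < n₀, 1 < Z m) →
      ∀ n, n₀ ≤ n → Z n ≤ min 1 ((2 * K) ^ (-(1 / μ₁)) * b ^ (-(1 / μ₁ ^ 2)) *
        b ^ (-((n : ℝ) / μ₁)))) ∧
    Tendsto Z atTop (nhds 0) := by
  have hb0 : 0 < b := by linarith
  have h2K : 0 < 2 * K := by linarith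
  have hβ : 0 < Real.log b := Real.log_pos hb
  have hlogmul : ∀ s t : ℝ, Real.log ((2 * K) ^ s * b ^ t)
      = s * Real.log (2 * K) + t * Real.log b := by
    intro s t
    rw [Real.log_mul (Real.rpow_pos_of_pos h2K _).ne' (Real.rpow_pos_of_pos hb0 _).ne',
      Real.log_rpow h2K, Real.log_rpow hb0]
  have hzero : ∀ n, Real.log (Z n) ≤ 0 ↔ Z n ≤ 1 := fun n => Real.log_nonpos_iff (hZpos n).le
  have hzero' : ∀ n, 0 < Real.log (Z n) ↔ 1 < Z n := fun n => Real.log_pos_iff (hZpos n).le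
  obtain ⟨hex, hall⟩ := log_geometric (fun n => Real.log (Z n)) (Real.log (2 * K)) (Real.log b)
    μ₁ μ₂ hβ hμ₁ hμ₁₂
    (fun n hn => log_step (hZpos n) (hZpos _) hb hK (hrec n) le_rfl
      (Real.rpow_le_rpow_of_exponent_ge (hZpos n) ((hzero n).1 hn) (by linarith)))
    (fun n hn => log_step (hZpos n) (hZpos _) hb hK (hrec n)
      (Real.rpow_le_rpow_of_exponent_le ((hzero' n).1 hn).le (by linarith)) le_rfl)
    (by
      have h := Real.log_le_log (hZpos 0) (hZ0.trans (min_le_left _ _))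
      rw [hlogmul] at h
      refine h.trans_eq ?_
      ring)
    (by
      have h := Real.log_le_log (hZpos 0) (hZ0.trans (min_le_right _ _))
      rw [hlogmul] at h
      refine h.trans_eq ?_
      ring)
  simp only [hzero, hzero'] at hex hall
  have hbound : ∀ n₀ : ℕ, Z n₀ ≤ 1 → (∀ m < n₀, 1 < Z m) →
      ∀ n, n₀ ≤ n → Z n ≤ min 1 ((2 * K) ^ (-(1 / μ₁)) * b ^ (-(1 / μ₁ ^ 2)) *
        b ^ (-((n : ℝ) / μ₁))) := by
    intro n₀ h0 hmin n hn
    obtain ⟨h1, h2⟩ := hall n₀ h0 hmin n hn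
    refine le_min h1 ?_
    rw [mul_assoc, ← Real.rpow_add hb0]
    rw [← Real.log_le_log_iff (hZpos n)
      (mul_pos (Real.rpow_pos_of_pos h2K _) (Real.rpow_pos_of_pos hb0 _)), hlogmul]
    refine h2.trans_eq ?_
    ring
  refine ⟨hex, hbound, ?_⟩
  classical
  have hev : ∀ᶠ n : ℕ in atTop, Z n ≤ (2 * K) ^ (-(1 / μ₁)) * b ^ (-(1 / μ₁ ^ 2)) *
      b ^ (-((n : ℝ) / μ₁)) := by
    filter_upwards [eventually_ge_atTop (Nat.find hex)] with n hn
    exact (hbound _ (Nat.find_spec hex) (fun m hm => not_le.1 (Nat.find_min hex hm)) n hn).trans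
      (min_le_right _ _)
  have hlim : Tendsto (fun n : ℕ => b ^ (-((n : ℝ) / μ₁))) atTop (nhds 0) :=
    (tendsto_rpow_atBot_of_base_gt_one b hb).comp
      (tendsto_neg_atTop_atBot.comp (tendsto_natCast_atTop_atTop.atTop_div_const hμ₁))
  have hlim' := hlim.const_mul ((2 * K) ^ (-(1 / μ₁)) * b ^ (-(1 / μ₁ ^ 2)))
  rw [mul_zero] at hlim'
  exact squeeze_zero' (Eventually.of_forall fun n => (hZpos n).le) hev hlim'
end

section
/- Let (Z_n)_{n≥0} be a nonincreasing sequence of positive real numbers satisfying the two-step recursion Z_{n+1} ≤ K b^n (Z_{n−1}^{1+μ₁} + Z_{n−1}^{1+μ₂}) for all n ≥ 1, where b > 1, K > 0 and 0 < μ₁ ≤ μ₂. If Z_0 ≤ min(1, (2b²K)^{−1/μ₁} b^{−2/μ₁²}, (2b²K)^{−1/μ₂} b^{−2/(μ₁μ₂) − 2(μ₂−μ₁)/μ₂²}), then Z_n → 0 as n → ∞. -/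
/-!
Only even indices matter. Put `Y m = Z (2 m)`. Since `Z ≤ Z 0 ≤ 1` and `μ₁ ≤ μ₂`, the term with
exponent `1 + μ₂` is dominated by the one with `1 + μ₁`, so the recursion at `n = 2 m + 1` becomes
`Y (m + 1) ≤ 2 K b ^ (2 m + 1) * Y m ^ (1 + μ₁)`. The classical fast geometric convergence argument
then gives `Y m ≤ r ^ m * Z 0` with `r = b ^ (-(2 / μ₁)) < 1`: because `r ^ μ₁ = b ^ (-2)`, the
inductive bound on `Y m ^ μ₁` cancels the factor `b ^ (2 m)`, and the smallness of `Z 0` absorbs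
the remaining constant. As `Z` is nonincreasing, convergence along the even indices suffices.
-/

open Filter

/-- Two-step geometric convergence: if `(Z_n)` is nonincreasing, positive, satisfies
`Z_{n+1} ≤ K bⁿ (Z_{n-1}^{1+μ₁} + Z_{n-1}^{1+μ₂})` for `n ≥ 1`, with `b > 1`, `K > 0`,
`0 < μ₁ ≤ μ₂`, and `Z₀` is small enough, then `Z_n → 0`. -/
theorem geometric_convergence_two_step (Z : ℕ → ℝ) (K b μ₁ μ₂ : ℝ)
    (hZpos : ∀ n, 0 < Z n) (hmono : ∀ n, Z (n + 1) ≤ Z n)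
    (hb : 1 < b) (hK : 0 < K) (hμ₁ : 0 < μ₁) (hμ₁₂ : μ₁ ≤ μ₂)
    (hrec : ∀ n : ℕ, 1 ≤ n →
      Z (n + 1) ≤ K * b ^ (n : ℝ) * (Z (n - 1) ^ (1 + μ₁) + Z (n - 1) ^ (1 + μ₂)))
    (hZ0 : Z 0 ≤ min 1 (min ((2 * b ^ (2 : ℝ) * K) ^ (-(1 / μ₁)) * b ^ (-(2 / μ₁ ^ 2)))
      ((2 * b ^ (2 : ℝ) * K) ^ (-(1 / μ₂)) *
        b ^ (-(2 / (μ₁ * μ₂)) - 2 * (μ₂ - μ₁) / μ₂ ^ 2)))) :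
    Tendsto Z atTop (nhds 0) := by
  have hb0 : 0 < b := by linarith
  have hanti : Antitone Z := antitone_nat_of_succ_le hmono
  have hZ1 : Z 0 ≤ 1 := hZ0.trans (min_le_left _ _)
  have hZ2 := hZ0.trans ((min_le_right _ _).trans (min_le_left _ _))
  set r : ℝ := b ^ (-(2 / μ₁)) with hr
  have hr0 : 0 < r := Real.rpow_pos_of_pos hb0 _
  have hr1 : r < 1 := Real.rpow_lt_one_of_one_lt_of_neg hb (by
    have : 0 < 2 / μ₁ := by positivity
    linarith)
  have hrμ : r ^ μ₁ = (b ^ 2)⁻¹ := by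
    rw [hr, ← Real.rpow_mul hb0.le, show -(2 / μ₁) * μ₁ = -(2 : ℝ) by field_simp,
      Real.rpow_neg hb0.le, Real.rpow_two]
  have hZμ : Z 0 ^ μ₁ ≤ (2 * b ^ 2 * K)⁻¹ * r := by
    have hA : 0 < 2 * b ^ 2 * K := by positivity
    rw [Real.rpow_two] at hZ2
    refine (Real.rpow_le_rpow (hZpos 0).le hZ2 hμ₁.le).trans (le_of_eq ?_)
    rw [Real.mul_rpow (Real.rpow_nonneg hA.le _) (Real.rpow_nonneg hb0.le _),
      ← Real.rpow_mul hA.le, ← Real.rpow_mul hb0.le,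
      show -(1 / μ₁) * μ₁ = -(1 : ℝ) by field_simp,
      show -(2 / μ₁ ^ 2) * μ₁ = -(2 / μ₁) by field_simp, Real.rpow_neg_one]
  have key : ∀ m : ℕ, Z (2 * m) ≤ r ^ m * Z 0 := by
    intro m
    induction m with
    | zero => simp
    | succ m ih =>
      have hY := hZpos (2 * m)
      have hY1 : Z (2 * m) ≤ 1 := (hanti (Nat.zero_le _)).trans hZ1
      have h := hrec (2 * m + 1) (by omega)
      rw [show 2 * m + 1 - 1 = 2 * m by omega, Real.rpow_natCast] at h
      have hle : Z (2 * m) ^ (1 + μ₂) ≤ Z (2 * m) ^ (1 + μ₁) :=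
        Real.rpow_le_rpow_of_exponent_ge hY hY1 (by linarith)
      have hpow : Z (2 * m) ^ μ₁ ≤ ((b ^ 2)⁻¹) ^ m * ((2 * b ^ 2 * K)⁻¹ * r) := by
        refine (Real.rpow_le_rpow hY.le ih hμ₁.le).trans ?_
        rw [Real.mul_rpow (by positivity) (hZpos 0).le, ← Real.rpow_natCast r m,
          ← Real.rpow_mul hr0.le, mul_comm (m : ℝ), Real.rpow_mul hr0.le, hrμ, Real.rpow_natCast]
        gcongr
      have hsplit : Z (2 * m) ^ (1 + μ₁) = Z (2 * m) * Z (2 * m) ^ μ₁ := by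
        rw [Real.rpow_add hY, Real.rpow_one]
      calc Z (2 * (m + 1)) = Z (2 * m + 1 + 1) := by ring_nf
        _ ≤ K * b ^ (2 * m + 1) * (Z (2 * m) ^ (1 + μ₁) + Z (2 * m) ^ (1 + μ₁)) := by
          refine h.trans ?_
          gcongr
        _ = 2 * K * b ^ (2 * m + 1) * (Z (2 * m) * Z (2 * m) ^ μ₁) := by rw [hsplit]; ring
        _ ≤ 2 * K * b ^ (2 * m + 1) *
            ((r ^ m * Z 0) * (((b ^ 2)⁻¹) ^ m * ((2 * b ^ 2 * K)⁻¹ * r))) := by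
          have := mul_nonneg (pow_nonneg hr0.le m) (hZpos 0).le
          gcongr
        _ = b⁻¹ * (r ^ (m + 1) * Z 0) := by
          rw [inv_pow, ← pow_mul]
          field_simp
          ring
        _ ≤ r ^ (m + 1) * Z 0 :=
          mul_le_of_le_one_left (mul_nonneg (by positivity) (hZpos 0).le)
            (inv_le_one_of_one_le₀ hb.le)
  have hgeom : Tendsto (fun m : ℕ => r ^ m * Z 0) atTop (nhds 0) := by
    simpa using (tendsto_pow_atTop_nhds_zero_of_lt_one hr0.le hr1).mul_const (Z 0)
  have heven : Tendsto (fun m : ℕ => Z (2 * m)) atTop (nhds 0) :=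
    squeeze_zero (fun m => (hZpos _).le) key hgeom
  have htwo : Tendsto (fun m : ℕ => 2 * m) atTop atTop :=
    tendsto_id.const_mul_atTop' (by norm_num)
  exact (tendsto_iff_tendsto_subseq_of_antitone hanti htwo).2 heven
end

section
/- Let (A, 𝔉, μ) be a measure space, let f, h : A → [0, ∞) be measurable with h(x) ≥ 1 for μ-a.e. x ∈ A, and let p, q : A → ℝ be measurable with p(x) > 0 and 1 < q(x) ≤ q⁺ < ∞ for all x ∈ A, where q⁺ is a constant. Let a₄, a₅, b₁ > 0 and set ε := min(1, a₄/(2b₁)). If ∫_A f(x)^{p(x)} dμ(x) < ∞, ∫_A h(x)^{q(x)} dμ(x) < ∞, and a₄ ∫_A f(x)^{p(x)} dμ(x) ≤ a₅ ∫_A h(x)^{q(x)} dμ(x) + b₁ ∫_A f(x)^{p(x)(q(x)−1)/q(x)} h(x) dμ(x), then ∫_A f(x)^{p(x)} dμ(x) ≤ (2/a₄)(a₅ + b₁ ε^{−(q⁺−1)}) ∫_A h(x)^{q(x)} dμ(x). -/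
/-!
Young's inequality with a small parameter gives, pointwise,
`f ^ (p (q - 1) / q) * h ≤ ε f ^ p + ε ^ (-(q - 1)) h ^ q`, and `ε ≤ 1` with `q ≤ q⁺` bounds the
last coefficient by `ε ^ (-(q⁺ - 1))`, uniformly in `x`. Integrating, and using `b₁ ε ≤ a₄ / 2`,
the term `b₁ ε ∫ f ^ p` is absorbed into the left-hand side `a₄ ∫ f ^ p`.
-/

open MeasureTheory Real

/-- Young's inequality with a parameter, up to constants: the product is at most one of the two
terms on the right, according to whether `h ≤ ε * g` or not. -/
lemma rpow_sub_one_mul_le {g h q ε : ℝ} (hg : 0 ≤ g) (hh : 0 ≤ h) (hq : 1 < q) (hε : 0 < ε) :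
    g ^ (q - 1) * h ≤ ε * g ^ q + ε ^ (-(q - 1)) * h ^ q := by
  have split_rpow : ∀ {t : ℝ}, 0 ≤ t → t ^ q = t ^ (q - 1) * t := fun {t} ht => by
    conv_rhs => rw [← rpow_one t, ← rpow_mul ht, one_mul,
      ← rpow_add_of_nonneg ht (by linarith) zero_le_one]
    rw [sub_add_cancel]
  have h1 : 0 ≤ ε * g ^ q := by positivity
  have h2 : 0 ≤ ε ^ (-(q - 1)) * h ^ q := by positivity
  rcases le_total h (ε * g) with hle | hle
  · have : g ^ (q - 1) * h ≤ g ^ (q - 1) * (ε * g) := by gcongr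
    rw [split_rpow hg] at h1 ⊢
    linarith
  · have hgle : g ≤ h / ε := by rw [le_div_iff₀ hε]; linarith
    have hpow : g ^ (q - 1) ≤ ε ^ (-(q - 1)) * h ^ (q - 1) := by
      calc g ^ (q - 1) ≤ (h / ε) ^ (q - 1) := rpow_le_rpow hg hgle (by linarith)
        _ = ε ^ (-(q - 1)) * h ^ (q - 1) := by
          rw [div_rpow hh hε.le, rpow_neg hε.le]; ring
    have := mul_le_mul_of_nonneg_right hpow hh
    rw [split_rpow hh] at h2 ⊢
    linarith

/-- Absorption of the gradient term: if `f, h ≥ 0` are measurable, `h ≥ 1` a.e.,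
`p(x) > 0`, `1 < q(x) ≤ q⁺`, `a₄, a₅, b₁ > 0`, `ε := min(1, a₄/(2b₁))`,
`∫ f^{p(x)} < ∞`, `∫ h^{q(x)} < ∞` and
`a₄ ∫ f^{p(x)} ≤ a₅ ∫ h^{q(x)} + b₁ ∫ f^{p(x)(q(x)-1)/q(x)} h`, then
`∫ f^{p(x)} ≤ (2/a₄)(a₅ + b₁ ε^{-(q⁺-1)}) ∫ h^{q(x)}`. -/
theorem absorb_gradient_term {A : Type*} [MeasurableSpace A] (μ : Measure A)
    (f h p q : A → ℝ) (qp a₄ a₅ b₁ ε : ℝ)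
    (hf : Measurable f) (hh : Measurable h) (hp : Measurable p) (hq : Measurable q)
    (hf0 : ∀ x, 0 ≤ f x) (hh0 : ∀ x, 0 ≤ h x) (hh1 : ∀ᵐ x ∂μ, 1 ≤ h x)
    (hp0 : ∀ x, 0 < p x) (hq1 : ∀ x, 1 < q x) (hqp : ∀ x, q x ≤ qp)
    (ha₄ : 0 < a₄) (ha₅ : 0 < a₅) (hb₁ : 0 < b₁)
    (hε : ε = min 1 (a₄ / (2 * b₁)))
    (hfint : Integrable (fun x => f x ^ (p x)) μ)
    (hhint : Integrable (fun x => h x ^ (q x)) μ)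
    (hineq : a₄ * ∫ x, f x ^ (p x) ∂μ ≤
      a₅ * ∫ x, h x ^ (q x) ∂μ +
        b₁ * ∫ x, f x ^ (p x * (q x - 1) / q x) * h x ∂μ) :
    ∫ x, f x ^ (p x) ∂μ ≤
      (2 / a₄) * (a₅ + b₁ * ε ^ (-(qp - 1))) * ∫ x, h x ^ (q x) ∂μ := by
  have hε0 : 0 < ε := by rw [hε]; positivity
  have hε1 : ε ≤ 1 := hε ▸ min_le_left _ _
  have hbε : b₁ * ε ≤ a₄ / 2 := by
    have : ε ≤ a₄ / (2 * b₁) := hε ▸ min_le_right _ _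
    rw [le_div_iff₀ (by positivity)] at this
    linarith
  have pointwise : ∀ x, f x ^ (p x * (q x - 1) / q x) * h x ≤
      ε * f x ^ (p x) + ε ^ (-(qp - 1)) * h x ^ (q x) := fun x => by
    have hqx : q x ≠ 0 := by linarith [hq1 x]
    -- Young's inequality is applied to `g = f ^ (p / q)`, for which `g ^ q = f ^ p`.
    have young := rpow_sub_one_mul_le (rpow_nonneg (hf0 x) (p x / q x)) (hh0 x) (hq1 x) hε0
    rw [← rpow_mul (hf0 x), ← rpow_mul (hf0 x), div_mul_cancel₀ _ hqx, div_mul_eq_mul_div] at young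
    have hmono : ε ^ (-(q x - 1)) ≤ ε ^ (-(qp - 1)) :=
      rpow_le_rpow_of_exponent_ge hε0 hε1 (by linarith [hqp x])
    have := mul_le_mul_of_nonneg_right hmono (rpow_nonneg (hh0 x) (q x))
    linarith
  have integrated : ∫ x, f x ^ (p x * (q x - 1) / q x) * h x ∂μ ≤
      ε * ∫ x, f x ^ (p x) ∂μ + ε ^ (-(qp - 1)) * ∫ x, h x ^ (q x) ∂μ := by
    rw [← integral_const_mul, ← integral_const_mul,
      ← integral_add (hfint.const_mul _) (hhint.const_mul _)]
    exact integral_mono_of_nonneg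
      (.of_forall fun x => mul_nonneg (rpow_nonneg (hf0 x) _) (hh0 x))
      ((hfint.const_mul _).add (hhint.const_mul _)) (.of_forall pointwise)
  have hF : 0 ≤ ∫ x, f x ^ (p x) ∂μ := integral_nonneg fun x => rpow_nonneg (hf0 x) _
  generalize ∫ x, f x ^ (p x) ∂μ = F at *
  generalize ∫ x, h x ^ (q x) ∂μ = H at *
  have h1 := mul_le_mul_of_nonneg_left integrated hb₁.le
  have h2 := mul_le_mul_of_nonneg_right hbε hF
  have key : a₄ / 2 * F ≤ (a₅ + b₁ * ε ^ (-(qp - 1))) * H := by linarith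
  calc F = 2 / a₄ * (a₄ / 2 * F) := by field_simp
    _ ≤ 2 / a₄ * ((a₅ + b₁ * ε ^ (-(qp - 1))) * H) := by gcongr
    _ = _ := by ring
end
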